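/- Let (k : K → X, f : X → M) be a Schreier extension with K commutative. Then f is a coequaliser of the two projections of the relation R_E: for every monoid Z and every monoid homomorphism h : X → Z such that h(x) = h(k(a) + x) for all x ∈ X and a ∈ K, there exists a unique monoid homomorphism φ : M → Z with φ ∘ f = h. -/

import Mathlib

/-- A monoid extension: `K`, `X` additive monoids (not assumed commutative),
`M` a multiplicative monoid, `k : K → X` an injective monoid homomorphism whose image
is `{x | f x = 1}`, and `f : X → M` a surjective monoid homomorphism. -/
structure MonoidExtension {K X M : Type*} [AddMonoid K] [AddMonoid X] [Monoid M]
    (k : K → X) (f : X → M) : Prop where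
  k_add : ∀ a b : K, k (a + b) = k a + k b
  k_zero : k 0 = 0
  k_inj : Function.Injective k
  ker_eq : ∀ x : X, f x = 1 ↔ x ∈ Set.range k
  f_add : ∀ x y : X, f (x + y) = f x * f y
  f_zero : f 0 = 1
  f_surj : Function.Surjective f

/-- The set `B_m` of representatives of `m`. -/
def Reps {K X M : Type*} [AddMonoid K] [AddMonoid X] [Monoid M]
    (k : K → X) (f : X → M) (m : M) : Set X :=
  {u | f u = m ∧ ∀ x : X, f x = m → ∃! a : K, x = k a + u}

/-- A monoid extension is a Schreier extension if every `m` has a representative. -/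
def IsSchreier {K X M : Type*} [AddMonoid K] [AddMonoid X] [Monoid M]
    (k : K → X) (f : X → M) : Prop :=
  ∀ m : M, (Reps k f m).Nonempty

/-!
Every fibre of `f` lies in a translate `k(K) + u`, so a map invariant under the translations
`x ↦ k a + x` is constant on the fibres of `f` and therefore descends along the surjection `f`.
-/

/-- The weakening of the Schreier condition in which an element of the fibre over `m` may be
written as `k a + u` in more than one way. Only the image of `k` matters, so `K` is a bare type. -/
def IsWeaklySchreier {K X M : Type*} [Add X] (k : K → X) (f : X → M) : Prop :=
  ∀ m : M, ∃ u : X, f u = m ∧ ∀ x : X, f x = m → ∃ a : K, x = k a + u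

theorem IsSchreier.isWeaklySchreier {K X M : Type*} [AddMonoid K] [AddMonoid X] [Monoid M]
    {k : K → X} {f : X → M} (hS : IsSchreier k f) : IsWeaklySchreier k f := fun m =>
  let ⟨u, hum, hu⟩ := hS m
  ⟨u, hum, fun x hx => (hu x hx).exists⟩

namespace IsWeaklySchreier

variable {K X M : Type*} [Add X] {k : K → X} {f : X → M}

theorem surjective (hW : IsWeaklySchreier k f) : Function.Surjective f := fun m =>
  let ⟨u, hum, _⟩ := hW m
  ⟨u, hum⟩

theorem factorsThrough {Z : Type*} {h : X → Z} (hW : IsWeaklySchreier k f)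
    (h_inv : ∀ (x : X) (a : K), h x = h (k a + x)) : Function.FactorsThrough h f := by
  intro x y hxy
  obtain ⟨u, -, hu⟩ := hW (f y)
  obtain ⟨a, rfl⟩ := hu x hxy
  obtain ⟨b, rfl⟩ := hu y rfl
  exact (h_inv u a).symm.trans (h_inv u b)

end IsWeaklySchreier

theorem existsUnique_hom_of_factorsThrough {X M Z : Type*} [AddZero X] [MulOne M]
    [AddZero Z] {f : X → M} {h : X → Z} (f_add : ∀ x y : X, f (x + y) = f x * f y)
    (f_zero : f 0 = 1) (f_surj : Function.Surjective f)
    (h_add : ∀ x y : X, h (x + y) = h x + h y) (h_zero : h 0 = 0)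
    (h_factors : Function.FactorsThrough h f) :
    ∃! φ : M → Z, (∀ m m' : M, φ (m * m') = φ m + φ m') ∧ φ 1 = 0 ∧
      ∀ x : X, φ (f x) = h x := by
  obtain ⟨φ, hφ⟩ : ∃ φ : M → Z, ∀ x, φ (f x) = h x :=
    ⟨Function.extend f h 0, h_factors.extend_apply 0⟩
  have φ_mul : ∀ m m' : M, φ (m * m') = φ m + φ m' :=
    f_surj.forall₂.2 fun x y => by rw [← f_add, hφ, hφ, hφ, h_add]
  have φ_one : φ 1 = 0 := by rw [← f_zero, hφ, h_zero]
  refine ⟨φ, ⟨φ_mul, φ_one, hφ⟩, ?_⟩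
  rintro ψ ⟨-, -, hψ⟩
  exact funext (f_surj.forall.2 fun x => (hψ x).trans (hφ x).symm)

theorem f_coequaliser_of_RE_general {K X M Z : Type*} [AddZero X] [MulOne M]
    [AddZero Z] {k : K → X} {f : X → M} (f_add : ∀ x y : X, f (x + y) = f x * f y)
    (f_zero : f 0 = 1) (hW : IsWeaklySchreier k f) {h : X → Z}
    (h_add : ∀ x y : X, h (x + y) = h x + h y) (h_zero : h 0 = 0)
    (h_inv : ∀ (x : X) (a : K), h x = h (k a + x)) :
    ∃! φ : M → Z, (∀ m m' : M, φ (m * m') = φ m + φ m') ∧ φ 1 = 0 ∧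
      ∀ x : X, φ (f x) = h x :=
  existsUnique_hom_of_factorsThrough f_add f_zero hW.surjective h_add h_zero
    (hW.factorsThrough h_inv)

/-- Proposition 5.1 (prop:f_coeq): for a Schreier extension with `K` commutative, `f` is
a coequaliser of the two projections of `R_E`: every monoid homomorphism `h : X → Z`
with `h x = h (k a + x)` for all `x, a` factors uniquely through `f`. -/
theorem f_coequaliser_of_RE {K X M Z : Type*} [AddCommMonoid K] [AddMonoid X] [Monoid M]
    [AddMonoid Z]
    (k : K → X) (f : X → M) (hE : MonoidExtension k f) (hS : IsSchreier k f)
    (h : X → Z) (hh_add : ∀ x y : X, h (x + y) = h x + h y) (hh_zero : h 0 = 0)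
    (hh : ∀ (x : X) (a : K), h x = h (k a + x)) :
    ∃! φ : M → Z, (∀ m m' : M, φ (m * m') = φ m + φ m') ∧ φ 1 = 0 ∧
      ∀ x : X, φ (f x) = h x :=
  f_coequaliser_of_RE_general hE.f_add hE.f_zero hS.isWeaklySchreier hh_add hh_zero hh
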